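/- For all nonnegative integers a_1, a_2, a_3, the constant term c_3(⟨a_1, a_2, a_3⟩; ⟨−1, 0, 1⟩) satisfies (1 + a_2 + a_3) · a_1! a_2! a_3! · c_3(⟨a_1, a_2, a_3⟩; ⟨−1, 0, 1⟩) = −a_1 · (a_1 + a_2 + a_3)!. -/

import Mathlib

/-- The polynomial `∏_{1 ≤ i ≠ j ≤ n} (x_j - x_i)^{a_j}` over `ℤ`. -/
noncomputable def dysonPoly (n : ℕ) (a : Fin n → ℕ) : MvPolynomial (Fin n) ℤ :=
  ∏ j : Fin n, ∏ i ∈ Finset.univ.erase j, (MvPolynomial.X j - MvPolynomial.X i) ^ a j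

/-- The constant term `c_n(a; b)` of the Laurent polynomial
`F_n(x; a; b) = ∏_h x_h^{-b_h} ∏_{1 ≤ i ≠ j ≤ n} (1 - x_i/x_j)^{a_j}`, i.e. the
coefficient of `∏_j x_j^{(n-1)a_j + b_j}` in `∏_{1 ≤ i ≠ j ≤ n} (x_j - x_i)^{a_j}`,
taken to be `0` if some exponent `(n-1)a_j + b_j` is negative. -/
noncomputable def dysonCT (n : ℕ) (a : Fin n → ℕ) (b : Fin n → ℤ) : ℤ :=
  if ∀ j, 0 ≤ ((n : ℤ) - 1) * a j + b j then
    MvPolynomial.coeff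
      (Finsupp.equivFunOnFinite.symm fun j => (((n : ℤ) - 1) * a j + b j).toNat)
      (dysonPoly n a)
  else 0

namespace DysonAux
open MvPolynomial

noncomputable def e (i j k : ℕ) : Fin 3 →₀ ℕ :=
  Finsupp.single 0 i + Finsupp.single 1 j + Finsupp.single 2 k

lemma e0 (i j k : ℕ) : e i j k 0 = i := by simp [e]
lemma e1 (i j k : ℕ) : e i j k 1 = j := by simp [e]
lemma e2 (i j k : ℕ) : e i j k 2 = k := by simp [e]

lemma e_ext (m : Fin 3 →₀ ℕ) (i j k : ℕ) (h0 : m 0 = i) (h1 : m 1 = j) (h2 : m 2 = k) :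
    m = e i j k := by
  ext t
  fin_cases t
  · simpa [e0] using h0
  · simpa [e1] using h1
  · simpa [e2] using h2

lemma e_inj {i j k i' j' k' : ℕ} : e i j k = e i' j' k' ↔ i = i' ∧ j = j' ∧ k = k' := by
  constructor
  · intro h
    refine ⟨?_, ?_, ?_⟩
    · rw [← e0 i j k, h, e0]
    · rw [← e1 i j k, h, e1]
    · rw [← e2 i j k, h, e2]
  · rintro ⟨rfl, rfl, rfl⟩
    rfl

lemma mono_eq (p q r : ℕ) :
    (X 0 ^ p * X 1 ^ q * X 2 ^ r : MvPolynomial (Fin 3) ℤ) = monomial (e p q r) 1 := by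
  simp [e, X_pow_eq_monomial, monomial_mul]

lemma coeff_mono_mul (p q r i j k : ℕ) (Q : MvPolynomial (Fin 3) ℤ) :
    coeff (e (i + p) (j + q) (k + r)) (X 0 ^ p * X 1 ^ q * X 2 ^ r * Q) = coeff (e i j k) Q := by
  rw [mono_eq]
  have : e (i + p) (j + q) (k + r) = e p q r + e i j k := by
    symm
    apply e_ext <;> simp [e0, e1, e2, add_comm]
  rw [this, coeff_monomial_mul, one_mul]

lemma coeff_mono_mul_zero (p q r i j k : ℕ) (Q : MvPolynomial (Fin 3) ℤ)
    (h : i < p ∨ j < q ∨ k < r) :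
    coeff (e i j k) (X 0 ^ p * X 1 ^ q * X 2 ^ r * Q) = 0 := by
  rw [mono_eq, coeff_monomial_mul', if_neg]
  intro hle
  have h0 := hle 0
  have h1 := hle 1
  have h2 := hle 2
  simp only [e0, e1, e2] at h0 h1 h2
  omega

/-- binomial coefficients, variables 0 and 1 -/
lemma coeff_bin01 (n i j k : ℕ) : coeff (e i j k) ((X 0 - X 1 : MvPolynomial (Fin 3) ℤ) ^ n) =
    if i + j = n ∧ k = 0 then (-1) ^ j * (n.choose j : ℤ) else 0 := by
  have hx : (X 0 - X 1 : MvPolynomial (Fin 3) ℤ) ^ n = ∑ m ∈ Finset.range (n + 1),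
      monomial (e (n - m) m 0) ((-1) ^ m * (n.choose m : ℤ)) := by
    rw [sub_eq_neg_add, add_pow]
    refine Finset.sum_congr rfl fun m _ => ?_
    rw [← mul_one ((-1) ^ m * (n.choose m : ℤ)), ← C_mul_monomial, ← mono_eq, neg_pow]
    simp
    ring
  rw [hx, coeff_sum]
  simp only [coeff_monomial, e_inj]
  split_ifs with h
  · obtain ⟨h, rfl⟩ := h
    rw [Finset.sum_eq_single j]
    · rw [if_pos]
      omega
    · intro b _ hb
      rw [if_neg]
      tauto
    · intro hj
      simp at hj
      omega
  · refine Finset.sum_eq_zero fun m hm => ?_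
    rw [if_neg]
    simp at hm
    omega

lemma coeff_bin02 (n i j k : ℕ) : coeff (e i j k) ((X 0 - X 2 : MvPolynomial (Fin 3) ℤ) ^ n) =
    if i + k = n ∧ j = 0 then (-1) ^ k * (n.choose k : ℤ) else 0 := by
  have hx : (X 0 - X 2 : MvPolynomial (Fin 3) ℤ) ^ n = ∑ m ∈ Finset.range (n + 1),
      monomial (e (n - m) 0 m) ((-1) ^ m * (n.choose m : ℤ)) := by
    rw [sub_eq_neg_add, add_pow]
    refine Finset.sum_congr rfl fun m _ => ?_
    rw [← mul_one ((-1) ^ m * (n.choose m : ℤ)), ← C_mul_monomial, ← mono_eq, neg_pow]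
    simp
    ring
  rw [hx, coeff_sum]
  simp only [coeff_monomial, e_inj]
  split_ifs with h
  · obtain ⟨h, rfl⟩ := h
    rw [Finset.sum_eq_single k]
    · rw [if_pos]
      omega
    · intro b _ hb
      rw [if_neg]
      tauto
    · intro hj
      simp at hj
      omega
  · refine Finset.sum_eq_zero fun m hm => ?_
    rw [if_neg]
    simp at hm
    omega

noncomputable def P (a b c : ℕ) : MvPolynomial (Fin 3) ℤ :=
  (X 0 - X 1) ^ a * (X 0 - X 2) ^ a * ((X 1 - X 0) ^ b * (X 1 - X 2) ^ b) *
    ((X 2 - X 0) ^ c * (X 2 - X 1) ^ c)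

lemma good_aux {R : Type*} [CommRing R] (x y z p : R) :
    p * ((x - y) * (x - z) * ((y - x) * (y - z)) * ((z - x) * (z - y))) =
    x ^ 2 * y ^ 0 * z ^ 0 * (p * (((y - x) * (y - z)) * ((z - x) * (z - y)))) +
    x ^ 0 * y ^ 2 * z ^ 0 * (p * (((x - y) * (x - z)) * ((z - x) * (z - y)))) +
    x ^ 0 * y ^ 0 * z ^ 2 * (p * (((x - y) * (x - z)) * ((y - x) * (y - z)))) := by
  have h : (x - y) * (x - z) * ((y - x) * (y - z)) * ((z - x) * (z - y)) =
    x ^ 2 * (((y - x) * (y - z)) * ((z - x) * (z - y))) +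
    y ^ 2 * (((x - y) * (x - z)) * ((z - x) * (z - y))) +
    z ^ 2 * (((x - y) * (x - z)) * ((y - x) * (y - z))) := by
    ring
  rw [h]
  simp only [pow_zero, mul_one, one_mul, mul_add, mul_left_comm p]

lemma good (a b c : ℕ) : P (a + 1) (b + 1) (c + 1) =
    X 0 ^ 2 * X 1 ^ 0 * X 2 ^ 0 * P a (b + 1) (c + 1) +
    X 0 ^ 0 * X 1 ^ 2 * X 2 ^ 0 * P (a + 1) b (c + 1) +
    X 0 ^ 0 * X 1 ^ 0 * X 2 ^ 2 * P (a + 1) (b + 1) c := by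
  have h1 : P (a + 1) (b + 1) (c + 1) = P a b c * ((X 0 - X 1) * (X 0 - X 2) *
      ((X 1 - X 0) * (X 1 - X 2)) * ((X 2 - X 0) * (X 2 - X 1))) := by
    simp only [P, pow_succ _ a, pow_succ _ b, pow_succ _ c]
    generalize (X 0 - X 1 : MvPolynomial (Fin 3) ℤ) = u1
    generalize (X 0 - X 2 : MvPolynomial (Fin 3) ℤ) = u2
    generalize (X 1 - X 0 : MvPolynomial (Fin 3) ℤ) = u3
    generalize (X 1 - X 2 : MvPolynomial (Fin 3) ℤ) = u4
    generalize (X 2 - X 0 : MvPolynomial (Fin 3) ℤ) = u5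
    generalize (X 2 - X 1 : MvPolynomial (Fin 3) ℤ) = u6
    ring
  have h2 : P a (b + 1) (c + 1) = P a b c *
      (((X 1 - X 0) * (X 1 - X 2)) * ((X 2 - X 0) * (X 2 - X 1))) := by
    simp only [P, pow_succ _ b, pow_succ _ c]
    generalize (X 1 - X 0 : MvPolynomial (Fin 3) ℤ) = u3
    generalize (X 1 - X 2 : MvPolynomial (Fin 3) ℤ) = u4
    generalize (X 2 - X 0 : MvPolynomial (Fin 3) ℤ) = u5
    generalize (X 2 - X 1 : MvPolynomial (Fin 3) ℤ) = u6
    ring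
  have h3 : P (a + 1) b (c + 1) = P a b c *
      (((X 0 - X 1) * (X 0 - X 2)) * ((X 2 - X 0) * (X 2 - X 1))) := by
    simp only [P, pow_succ _ a, pow_succ _ c]
    generalize (X 0 - X 1 : MvPolynomial (Fin 3) ℤ) = u1
    generalize (X 0 - X 2 : MvPolynomial (Fin 3) ℤ) = u2
    generalize (X 2 - X 0 : MvPolynomial (Fin 3) ℤ) = u5
    generalize (X 2 - X 1 : MvPolynomial (Fin 3) ℤ) = u6
    ring
  have h4 : P (a + 1) (b + 1) c = P a b c *
      (((X 0 - X 1) * (X 0 - X 2)) * ((X 1 - X 0) * (X 1 - X 2))) := by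
    simp only [P, pow_succ _ a, pow_succ _ b]
    generalize (X 0 - X 1 : MvPolynomial (Fin 3) ℤ) = u1
    generalize (X 0 - X 2 : MvPolynomial (Fin 3) ℤ) = u2
    generalize (X 1 - X 0 : MvPolynomial (Fin 3) ℤ) = u3
    generalize (X 1 - X 2 : MvPolynomial (Fin 3) ℤ) = u4
    ring
  rw [h1, h2, h3, h4]
  exact good_aux (X 0) (X 1) (X 2) (P a b c)

noncomputable def G (a b c : ℕ) : ℤ := coeff (e (2 * a + 1) (2 * b) (2 * c + 1)) (P (a + 1) b c)

lemma G_succ (a b c : ℕ) : G (a + 1) (b + 1) (c + 1) =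
    G a (b + 1) (c + 1) + G (a + 1) b (c + 1) + G (a + 1) (b + 1) c := by
  unfold G
  rw [good, coeff_add, coeff_add]
  have h1 := coeff_mono_mul 2 0 0 (2 * a + 1) (2 * (b + 1)) (2 * (c + 1) + 1)
    (P (a + 1) (b + 1) (c + 1))
  have h2 := coeff_mono_mul 0 2 0 (2 * (a + 1) + 1) (2 * b) (2 * (c + 1) + 1)
    (P (a + 1 + 1) b (c + 1))
  have h3 := coeff_mono_mul 0 0 2 (2 * (a + 1) + 1) (2 * (b + 1)) (2 * c + 1)
    (P (a + 1 + 1) (b + 1) c)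
  rw [show 2 * a + 1 + 2 = 2 * (a + 1) + 1 by ring] at h1
  rw [show 2 * b + 2 = 2 * (b + 1) by ring] at h2
  rw [show 2 * c + 1 + 2 = 2 * (c + 1) + 1 by ring] at h3
  simp only [add_zero] at h1 h2 h3
  rw [h1, h2, h3]

lemma G_zero_succ (b c : ℕ) : G 0 (b + 1) (c + 1) = G 0 b (c + 1) + G 0 (b + 1) c := by
  unfold G
  rw [good, coeff_add, coeff_add, coeff_mono_mul_zero 2 0 0 _ _ _ _ (by omega), zero_add]
  congr 1
  · exact coeff_mono_mul 0 2 0 (2 * 0 + 1) (2 * b) (2 * (c + 1) + 1) _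
  · exact coeff_mono_mul 0 0 2 (2 * 0 + 1) (2 * (b + 1)) (2 * c + 1) _

lemma pow_mod (x y : MvPolynomial (Fin 3) ℤ) (n : ℕ) : ∃ Q, (x - y) ^ n = x ^ n + y * Q := by
  obtain ⟨Q, hQ⟩ := sub_dvd_pow_sub_pow (x - y) x n
  refine ⟨-Q, ?_⟩
  linear_combination hQ

lemma pow_mod2 (x y : MvPolynomial (Fin 3) ℤ) (n : ℕ) :
    ∃ Q, (x - y) ^ (n + 1) = x ^ (n + 1) - (n + 1) * y * x ^ n + y ^ 2 * Q := by
  induction n with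
  | zero => exact ⟨0, by simp⟩
  | succ n ih =>
    obtain ⟨Q, hQ⟩ := ih
    refine ⟨(n + 1) * x ^ n + (x - y) * Q, ?_⟩
    rw [pow_succ, hQ]
    push_cast
    ring

lemma G_b0 (a c : ℕ) : G a 0 c = -((a + 1 + c).choose (c + 1) : ℤ) := by
  obtain ⟨Q, hQ⟩ := pow_mod (X 0) (X 1) (a + 1)
  obtain ⟨R, hR⟩ := pow_mod (X 2) (X 1) c
  have h : P (a + 1) 0 c = C ((-1) ^ c) *
      (X 0 ^ (a + 1) * X 1 ^ 0 * X 2 ^ c * (X 0 - X 2) ^ (a + 1 + c)) +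
      X 0 ^ 0 * X 1 ^ 1 * X 2 ^ 0 * ((X 0 - X 2) ^ (a + 1) * (X 2 - X 0) ^ c *
        (Q * X 2 ^ c + R * X 0 ^ (a + 1) + X 1 * Q * R)) := by
    have h2 : (X 2 - X 0 : MvPolynomial (Fin 3) ℤ) ^ c = (-1) ^ c * (X 0 - X 2) ^ c := by
      rw [← mul_pow]
      ring
    simp only [P, hQ, hR, h2, map_pow, map_neg, map_one]
    ring
  have h3 : coeff (e (2 * a + 1) (2 * 0) (2 * c + 1))
      (X 0 ^ (a + 1) * X 1 ^ 0 * X 2 ^ c * (X 0 - X 2) ^ (a + 1 + c) : MvPolynomial (Fin 3) ℤ) =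
      (-1) ^ (c + 1) * ((a + 1 + c).choose (c + 1) : ℤ) := by
    have := coeff_mono_mul (a + 1) 0 c a 0 (c + 1) ((X 0 - X 2) ^ (a + 1 + c))
    rw [coeff_bin02, if_pos (by omega)] at this
    rw [← this]
    congr 2 <;> omega
  unfold G
  rw [h, coeff_add, coeff_C_mul, coeff_mono_mul_zero 0 1 0 _ _ _ _ (by omega), add_zero, h3,
    ← mul_assoc, ← pow_add, Odd.neg_one_pow ⟨c, by ring⟩]
  ring

lemma G_c0 (a b : ℕ) : G a b 0 =
    -((a : ℤ) + 1) * ((a + 1 + b).choose b : ℤ) + b * ((a + 1 + b).choose (b + 1) : ℤ) := by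
  obtain ⟨Q, hQ⟩ := pow_mod2 (X 0) (X 2) a
  have h2 : (X 1 - X 0 : MvPolynomial (Fin 3) ℤ) ^ b = (-1) ^ b * (X 0 - X 1) ^ b := by
    rw [← mul_pow]
    ring
  have key : coeff (e (2 * a + 1) (2 * b) (2 * 0 + 1)) (X 0 ^ a * X 1 ^ b * X 2 ^ 1 *
      (X 0 - X 1) ^ (a + 1 + b) : MvPolynomial (Fin 3) ℤ) = (-1) ^ b * ((a + 1 + b).choose b : ℤ) := by
    have := coeff_mono_mul a b 1 (a + 1) b 0 ((X 0 - X 1) ^ (a + 1 + b))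
    rw [coeff_bin01, if_pos (by omega)] at this
    rw [← this]
    congr 2 <;> omega
  have key0 : coeff (e (2 * a + 1) (2 * b) (2 * 0 + 1)) (X 0 ^ (a + 1) * X 1 ^ b * X 2 ^ 0 *
      (X 0 - X 1) ^ (a + 1 + b) : MvPolynomial (Fin 3) ℤ) = 0 := by
    rcases Nat.lt_or_ge (2 * a + 1) (a + 1) with hl | hl
    · omega
    have := coeff_mono_mul (a + 1) b 0 a b 1 ((X 0 - X 1) ^ (a + 1 + b))
    rw [coeff_bin01, if_neg (by omega)] at this
    rw [← this]
    congr 2 <;> omega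
  have sgn : ((-1 : ℤ)) ^ b * (-1) ^ b = 1 := by
    rw [← pow_add, Even.neg_one_pow ⟨b, rfl⟩]
  unfold G
  rcases b with _ | b
  · have h : P (a + 1) 0 0 =
        X 0 ^ (a + 1) * X 1 ^ 0 * X 2 ^ 0 * (X 0 - X 1) ^ (a + 1 + 0)
        + C (-((a : ℤ) + 1)) * (X 0 ^ a * X 1 ^ 0 * X 2 ^ 1 * (X 0 - X 1) ^ (a + 1 + 0))
        + X 0 ^ 0 * X 1 ^ 0 * X 2 ^ 2 * (Q * (X 0 - X 1) ^ (a + 1)) := by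
      simp only [P, hQ, map_neg, map_add, map_one, map_natCast]
      ring
    rw [h, coeff_add, coeff_add, coeff_C_mul, key, key0,
      coeff_mono_mul_zero 0 0 2 _ _ _ _ (by omega)]
    simp
  · obtain ⟨R, hR⟩ := pow_mod2 (X 1) (X 2) b
    have key2 : coeff (e (2 * a + 1) (2 * (b + 1)) (2 * 0 + 1)) (X 0 ^ (a + 1) * X 1 ^ b * X 2 ^ 1 *
        (X 0 - X 1) ^ (a + 1 + (b + 1)) : MvPolynomial (Fin 3) ℤ) =
        (-1) ^ (b + 2) * ((a + 1 + (b + 1)).choose (b + 1 + 1) : ℤ) := by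
      have := coeff_mono_mul (a + 1) b 1 a (b + 2) 0 ((X 0 - X 1) ^ (a + 1 + (b + 1)))
      rw [coeff_bin01, if_pos (by omega)] at this
      rw [← this]
      congr 2 <;> omega
    have h : P (a + 1) (b + 1) 0 = C ((-1) ^ (b + 1)) * (
        X 0 ^ (a + 1) * X 1 ^ (b + 1) * X 2 ^ 0 * (X 0 - X 1) ^ (a + 1 + (b + 1))
        + C (-((a : ℤ) + 1)) *
          (X 0 ^ a * X 1 ^ (b + 1) * X 2 ^ 1 * (X 0 - X 1) ^ (a + 1 + (b + 1)))
        + C (-((b : ℤ) + 1)) *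
          (X 0 ^ (a + 1) * X 1 ^ b * X 2 ^ 1 * (X 0 - X 1) ^ (a + 1 + (b + 1)))
        + X 0 ^ 0 * X 1 ^ 0 * X 2 ^ 2 * ((X 0 - X 1) ^ (a + 1 + (b + 1)) *
          (Q * (X 1 ^ (b + 1) - ((b : MvPolynomial (Fin 3) ℤ) + 1) * X 2 * X 1 ^ b + X 2 ^ 2 * R) +
           R * (X 0 ^ (a + 1) - ((a : MvPolynomial (Fin 3) ℤ) + 1) * X 2 * X 0 ^ a) +
           ((a : MvPolynomial (Fin 3) ℤ) + 1) * ((b : MvPolynomial (Fin 3) ℤ) + 1) * X 0 ^ a * X 1 ^ b))) := by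
      simp only [P, hQ, hR, h2, map_neg, map_add, map_one, map_natCast, map_pow]
      ring
    rw [h, coeff_C_mul, coeff_add, coeff_add, coeff_add, coeff_C_mul, coeff_C_mul, key, key0, key2,
      coeff_mono_mul_zero 0 0 2 _ _ _ _ (by omega)]
    push_cast
    linear_combination (-((a : ℤ) + 1) * ((a + 1 + (b + 1)).choose (b + 1) : ℤ)
      + (b + 1) * ((a + 1 + (b + 1)).choose (b + 1 + 1) : ℤ)) * sgn

lemma main (a b c : ℕ) : (1 + (b : ℤ) + c) * (a.factorial : ℤ) * (b.factorial : ℤ) *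
    (c.factorial : ℤ) * G a b c = -((a + 1 + b + c).factorial : ℤ) := by
  induction hs : a + b + c using Nat.strong_induction_on generalizing a b c with
  | _ s ih =>
  rcases b with _ | b
  · have h := Nat.choose_mul_factorial_mul_factorial (n := a + 1 + c) (k := c + 1) (by omega)
    rw [show a + 1 + c - (c + 1) = a by omega, Nat.factorial_succ c] at h
    zify at h
    rw [G_b0]
    simp only [Nat.factorial_zero, add_zero]
    push_cast at h ⊢
    linear_combination -h
  rcases c with _ | c
  · have h := Nat.choose_mul_factorial_mul_factorial (n := a + 1 + (b + 1)) (k := b + 1) (by omega)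
    have h' := Nat.choose_mul_factorial_mul_factorial (n := a + 1 + (b + 1)) (k := b + 1 + 1)
      (by omega)
    rw [show a + 1 + (b + 1) - (b + 1) = a + 1 by omega, Nat.factorial_succ a] at h
    rw [show a + 1 + (b + 1) - (b + 1 + 1) = a by omega, Nat.factorial_succ (b + 1)] at h'
    zify at h h'
    rw [G_c0]
    simp only [Nat.factorial_zero, add_zero]
    push_cast at h h' ⊢
    linear_combination (-((b : ℤ) + 2)) * h + (b + 1) * h'
  have i2 := ih (a + b + (c + 1)) (by omega) a b (c + 1) rfl
  have i3 := ih (a + (b + 1) + c) (by omega) a (b + 1) c rfl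
  have ht : ((b : ℤ) + c + 2) ≠ 0 := by positivity
  apply mul_left_cancel₀ ht
  rcases a with _ | a
  · rw [G_zero_succ]
    rw [show 0 + 1 + b + (c + 1) = b + c + 2 by ring] at i2
    rw [show 0 + 1 + (b + 1) + c = b + c + 2 by ring] at i3
    rw [show 0 + 1 + (b + 1) + (c + 1) = b + c + 2 + 1 by ring, Nat.factorial_succ (b + c + 2)]
    simp only [Nat.factorial_succ b, Nat.factorial_succ c] at i2 i3 ⊢
    push_cast at i2 i3 ⊢
    linear_combination ((b : ℤ) + c + 3) * (b + 1) * i2 + ((b : ℤ) + c + 3) * (c + 1) * i3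
  · have i1 := ih (a + (b + 1) + (c + 1)) (by omega) a (b + 1) (c + 1) rfl
    rw [G_succ]
    rw [show a + 1 + (b + 1) + (c + 1) = a + b + c + 3 by ring] at i1
    rw [show a + 1 + 1 + b + (c + 1) = a + b + c + 3 by ring] at i2
    rw [show a + 1 + 1 + (b + 1) + c = a + b + c + 3 by ring] at i3
    rw [show a + 1 + 1 + (b + 1) + (c + 1) = a + b + c + 3 + 1 by ring,
      Nat.factorial_succ (a + b + c + 3)]
    simp only [Nat.factorial_succ a, Nat.factorial_succ b, Nat.factorial_succ c] at i1 i2 i3 ⊢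
    push_cast at i1 i2 i3 ⊢
    linear_combination ((b : ℤ) + c + 2) * (a + 1) * i1 +
      ((b : ℤ) + c + 3) * (b + 1) * i2 + ((b : ℤ) + c + 3) * (c + 1) * i3

lemma dysonPoly_eq (a b c : ℕ) : dysonPoly 3 ![a, b, c] = P a b c := by
  have s0 : (Finset.univ.erase 0 : Finset (Fin 3)) = {1, 2} := by decide
  have s1 : (Finset.univ.erase 1 : Finset (Fin 3)) = {0, 2} := by decide
  have s2 : (Finset.univ.erase 2 : Finset (Fin 3)) = {0, 1} := by decide
  simp [dysonPoly, P, Fin.prod_univ_three, s0, s1, s2]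

lemma ct_eq (a b c : ℕ) : dysonCT 3 ![a + 1, b, c] ![-1, 0, 1] = G a b c := by
  unfold dysonCT
  rw [if_pos]
  · rw [dysonPoly_eq, G]
    congr 1
    apply e_ext <;> simp <;> omega
  · intro j
    fin_cases j <;> simp <;> omega

lemma ct_zero (b c : ℕ) : dysonCT 3 ![0, b, c] ![-1, 0, 1] = 0 := by
  unfold dysonCT
  rw [if_neg]
  intro h
  have := h 0
  simp at this

end DysonAux

/-- Closed form for `c_3(⟨a_1, a_2, a_3⟩; ⟨-1, 0, 1⟩)`:
`(1+a_2+a_3) a_1! a_2! a_3! · c_3 = -a_1 (a_1+a_2+a_3)!`. -/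
theorem dysonCT_three_neg_one_zero_one (a₁ a₂ a₃ : ℕ) :
    (1 + (a₂ : ℤ) + a₃) * (a₁.factorial : ℤ) * (a₂.factorial : ℤ) * (a₃.factorial : ℤ) *
        dysonCT 3 ![a₁, a₂, a₃] ![-1, 0, 1]
      = -(a₁ : ℤ) * ((a₁ + a₂ + a₃).factorial : ℤ) := by
  rcases a₁ with _ | a
  · rw [DysonAux.ct_zero]
    simp
  · rw [DysonAux.ct_eq, Nat.factorial_succ]
    have h := DysonAux.main a a₂ a₃
    push_cast
    linear_combination ((a : ℤ) + 1) * h
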